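/- Let P be a G-Hilbert module and E = E_P. Let C_c(G,r*E) be the set of continuous compactly supported functions φ : G → E with φ(g) ∈ E_{r(g)} for all g. Then the map φ ↦ φ̂, where φ̂(y) = φ|_{G^y} ∈ L²(G^y,E_y), sends C_c(G,r*E) into C_0(Y, L²(G) ⊗ E) (the continuous sections vanishing at infinity of the Hilbert bundle with fiber L²(G^y,E_y) at y) and its image is dense in the uniform norm; moreover this image contains every section of the form (ĥ ⊗ p̂)(y) = h|_{G^y} ⊗ p̂(y) with h ∈ C_c(G) and p ∈ P. -/

import Mathlib

/-!
Evaluating the `C₀(Y)`-valued inner product at `y` gives a positive semidefinite form on `P`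
whose seminorm descends to the fibre `P / I_y P`, so all estimates can be made on
representatives, and `‖p‖` is the supremum over `y` of the fibre norms of `p̂(y)`.

The computation behind the result is `fibNormRep_tensor_sq`: the fibre norm of `∑ pᵢ ⊗ hᵢ` at
`y` is the `L²(G^y, E_y)` norm of `g ↦ ∑ hᵢ(g) p̂ᵢ(r(g))`.  A partition of unity on `G`
(`exists_partition_approx`) approximates `φ ∈ C_c(G, r*E)` uniformly by such sums, and
multiplying by a fixed bump function keeps all supports in one compact set, on which the Haar
measures `λ^y` have uniformly bounded mass.  The corresponding tensors are therefore Cauchy in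
the norm of the complete module `P ⊗ P_G`, and `φ̂` is the section of their limit.

For density, a partition of unity on `Y` shows that every section in `C₀(Y, E_R)` is a uniform
limit of sections `x̂` with `x ∈ R = P ⊗ P_G`, while `x` is a norm limit of finite sums
`∑ pᵢ ⊗ hᵢ` with `hᵢ ∈ C_c(G)`, which are images of sections in `C_c(G, r*E)`.
-/

noncomputable section
open scoped ZeroAtInfty
open Topology Filter ComplexConjugate

namespace Stabilization

/-- The set of continuous sections vanishing at infinity of a family of normed fibers,
relative to a given topology on the total space of the bundle. -/
def C0Sections {Y : Type} [TopologicalSpace Y] (H : Y → Type)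
    [∀ y, NormedAddCommGroup (H y)] (tE : TopologicalSpace ((y : Y) × H y)) :
    Set ((y : Y) → H y) :=
  {F | @Continuous Y ((y : Y) × H y) _ tE (fun y => ⟨y, F y⟩) ∧
    Tendsto (fun y => ‖F y‖) (cocompact Y) (nhds 0)}

/-- A Hilbert bundle over `Y` (Definition 2.1 of the paper): a family of Hilbert spaces
`H y` together with a second countable topology on the total space such that
(i) fiberwise addition and scalar multiplication are continuous, (ii) the norm along any
continuous section vanishing at infinity is continuous, (iii) the continuous sections
vanishing at infinity fill out every fiber, and (iv) the sets `U_{F,ε}` form a base. -/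
structure HilbertBundle (Y : Type) [TopologicalSpace Y] where
  H : Y → Type
  [nacg : ∀ y, NormedAddCommGroup (H y)]
  [ips : ∀ y, InnerProductSpace ℂ (H y)]
  [cpl : ∀ y, CompleteSpace (H y)]
  topE : TopologicalSpace ((y : Y) × H y)
  secondCountable : @SecondCountableTopology ((y : Y) × H y) topE
  add_cont : @Continuous {p : ((y : Y) × H y) × ((y : Y) × H y) // p.1.1 = p.2.1}
      ((y : Y) × H y)
      (@instTopologicalSpaceSubtype _ _ (@instTopologicalSpaceProd _ _ topE topE)) topE
      (fun p => ⟨p.1.1.1, p.1.1.2 + cast (congrArg H p.2).symm p.1.2.2⟩)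
  smul_cont : @Continuous (ℂ × (y : Y) × H y) ((y : Y) × H y)
      (@instTopologicalSpaceProd _ _ _ topE) topE
      (fun p => ⟨p.2.1, p.1 • p.2.2⟩)
  norm_cont : ∀ F ∈ C0Sections H topE, Continuous fun y => ‖F y‖
  fiber_full : ∀ (y : Y) (v : H y), ∃ F ∈ C0Sections H topE, F y = v
  isBasis : @TopologicalSpace.IsTopologicalBasis ((y : Y) × H y) topE
      {S | ∃ (U : Set Y) (F : (y : Y) → H y) (ε : ℝ), IsOpen U ∧ F ∈ C0Sections H topE ∧
        0 < ε ∧ S = {e | e.1 ∈ U ∧ ‖e.2 - F e.1‖ < ε}}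

attribute [instance] HilbertBundle.nacg HilbertBundle.ips HilbertBundle.cpl

/-- A Hilbert `C₀(Y)`-module structure on `P`: a right `C₀(Y)`-module action and a
`C₀(Y)`-valued inner product, complete for the norm `‖p‖ = ‖⟨p,p⟩‖^{1/2}` (completeness
being recorded by a `CompleteSpace` instance on `P` at use sites). -/
class HilbertCzeroModule (Y : Type) [TopologicalSpace Y] (P : Type)
    [NormedAddCommGroup P] [NormedSpace ℂ P] where
  msmul : P → C₀(Y, ℂ) → P
  minner : P → P → C₀(Y, ℂ)
  msmul_add_left : ∀ (p q : P) (f : C₀(Y, ℂ)), msmul (p + q) f = msmul p f + msmul q f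
  msmul_add_right : ∀ (p : P) (f g : C₀(Y, ℂ)), msmul p (f + g) = msmul p f + msmul p g
  msmul_mul : ∀ (p : P) (f g : C₀(Y, ℂ)), msmul (msmul p f) g = msmul p (f * g)
  msmul_csmul_left : ∀ (c : ℂ) (p : P) (f : C₀(Y, ℂ)), msmul (c • p) f = c • msmul p f
  msmul_csmul_right : ∀ (c : ℂ) (p : P) (f : C₀(Y, ℂ)), msmul p (c • f) = c • msmul p f
  minner_add_right : ∀ p q r : P, minner p (q + r) = minner p q + minner p r
  minner_conj : ∀ p q : P, minner p q = star (minner q p)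
  minner_csmul_right : ∀ (c : ℂ) (p q : P), minner p (c • q) = c • minner p q
  minner_msmul_right : ∀ (p q : P) (f : C₀(Y, ℂ)), minner p (msmul q f) = minner p q * f
  minner_self_re_nonneg : ∀ (p : P) (y : Y), 0 ≤ (minner p p y).re
  minner_self_im : ∀ (p : P) (y : Y), (minner p p y).im = 0
  norm_eq : ∀ p : P, ‖p‖ = Real.sqrt ‖minner p p‖

/-- The module action, with the base space explicit. -/
def modSMul (Y : Type) [TopologicalSpace Y] {P : Type} [NormedAddCommGroup P]
    [NormedSpace ℂ P] [HilbertCzeroModule Y P] (p : P) (f : C₀(Y, ℂ)) : P :=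
  HilbertCzeroModule.msmul p f

/-- The `C₀(Y)`-valued inner product, with the base space explicit. -/
def modIP (Y : Type) [TopologicalSpace Y] {P : Type} [NormedAddCommGroup P]
    [NormedSpace ℂ P] [HilbertCzeroModule Y P] (p q : P) : C₀(Y, ℂ) :=
  HilbertCzeroModule.minner p q

variable (Y : Type) [TopologicalSpace Y]
variable (P : Type) [NormedAddCommGroup P] [NormedSpace ℂ P] [HilbertCzeroModule Y P]

/-- `I_y P`: the closed submodule generated by products `p·f` with `f(y) = 0`. -/
def fiberIdeal (y : Y) : Submodule ℂ P :=
  Submodule.span ℂ {x | ∃ (f : C₀(Y, ℂ)) (p : P), f y = 0 ∧ x = modSMul Y p f}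

/-- The fiber `P_y = P / I_y P` of the Hilbert bundle associated to `P`. -/
abbrev Fib (y : Y) : Type := P ⧸ fiberIdeal Y P y

/-- `p ↦ p̂(y)`, the image of `p` in the fiber `P_y`. -/
def fibMk (y : Y) : P → Fib Y P y := Submodule.Quotient.mk

/-- The fiber norm of `p̂(y)`, computed from a representative. -/
def fibNormRep (y : Y) (p : P) : ℝ := Real.sqrt ((modIP Y p p) y).re

/-- The norm on the fiber `P_y` (the common value of `fibNormRep` over representatives). -/
def fibNormQ (y : Y) (h : Fib Y P y) : ℝ :=
  sInf {r | ∃ p : P, h = fibMk Y P y p ∧ r = fibNormRep Y P y p}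

/-- The total space `E_P = ⊔_y P_y` of the bundle associated to `P`. -/
abbrev TotalP : Type := (y : Y) × Fib Y P y

/-- The basic sets `U_{p,ε}` of the bundle `E_P`. -/
def basisP : Set (Set (TotalP Y P)) :=
  {S | ∃ (U : Set Y) (p : P) (ε : ℝ), IsOpen U ∧ 0 < ε ∧
    S = {e : TotalP Y P | e.1 ∈ U ∧ fibNormQ Y P e.1 (e.2 - fibMk Y P e.1 p) < ε}}

/-- The topology on `E_P` generated by the sets `U_{p,ε}`. -/
def topEP : TopologicalSpace (TotalP Y P) := TopologicalSpace.generateFrom (basisP Y P)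

/-- The continuous sections of `E_P` vanishing at infinity. -/
def C0SectionsP : Set ((y : Y) → Fib Y P y) :=
  {F | @Continuous Y (TotalP Y P) _ (topEP Y P) (fun y => ⟨y, F y⟩) ∧
    Tendsto (fun y => fibNormQ Y P y (F y)) (cocompact Y) (nhds 0)}

/-- The section `p̂` associated to `p ∈ P`. -/
def hatSec (p : P) : (y : Y) → Fib Y P y := fun y => fibMk Y P y p

/-- Transport between fibers of `E_P` over equal base points. -/
def fcast {y z : Y} (h : y = z) : Fib Y P y → Fib Y P z := fun v => h ▸ v


variable (Y : Type) [TopologicalSpace Y]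

/-- A second countable locally compact Hausdorff proper topological groupoid with unit
space `Y`.  Multiplication is recorded as a total map which is only constrained on
composable pairs. -/
structure LCGroupoid where
  G : Type
  [topG : TopologicalSpace G]
  [t2G : T2Space G]
  [lcG : LocallyCompactSpace G]
  [scG : SecondCountableTopology G]
  [mG : MeasurableSpace G]
  [bG : BorelSpace G]
  r : G → Y
  s : G → Y
  unit : Y → G
  mul : G → G → G
  inv : G → G
  unit_embedding : Topology.IsEmbedding unit
  r_unit : ∀ y, r (unit y) = y
  s_unit : ∀ y, s (unit y) = y
  r_cont : Continuous r
  s_cont : Continuous s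
  inv_cont : Continuous inv
  mul_cont : Continuous fun p : {p : G × G // s p.1 = r p.2} => mul p.1.1 p.1.2
  r_mul : ∀ g h, s g = r h → r (mul g h) = r g
  s_mul : ∀ g h, s g = r h → s (mul g h) = s h
  mul_assoc : ∀ g h k, s g = r h → s h = r k → mul (mul g h) k = mul g (mul h k)
  mul_unit : ∀ g, mul g (unit (s g)) = g
  unit_mul : ∀ g, mul (unit (r g)) g = g
  r_inv : ∀ g, r (inv g) = s g
  s_inv : ∀ g, s (inv g) = r g
  mul_inv : ∀ g, mul g (inv g) = unit (r g)
  inv_mul : ∀ g, mul (inv g) g = unit (s g)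
  proper : IsProperMap fun g => (r g, s g)

attribute [instance] LCGroupoid.topG LCGroupoid.t2G LCGroupoid.lcG LCGroupoid.scG
  LCGroupoid.mG LCGroupoid.bG

variable (Gp : LCGroupoid Y)

/-- A left Haar system `{λ^y}` for the groupoid `Gp`:  `λ^y` is a Radon-type measure
concentrated on `G^y = r⁻¹(y)` with support `G^y`, varying continuously, and
left invariant. -/
structure HaarSystem where
  lam : Y → MeasureTheory.Measure Gp.G
  concentrated : ∀ y, lam y ((Gp.r ⁻¹' {y})ᶜ) = 0
  full : ∀ (y : Y) (U : Set Gp.G), IsOpen U → (U ∩ Gp.r ⁻¹' {y}).Nonempty → lam y U ≠ 0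
  finiteOnCompacts : ∀ (y : Y) (K : Set Gp.G), IsCompact K → lam y K ≠ ⊤
  integral_continuous : ∀ F : Gp.G → ℂ, Continuous F → HasCompactSupport F →
    Continuous fun y => ∫ g, F g ∂(lam y)
  left_invariant : ∀ (g₀ : Gp.G) (F : Gp.G → ℂ), Continuous F → HasCompactSupport F →
    ∫ g, F (Gp.mul g₀ g) ∂(lam (Gp.s g₀)) = ∫ g, F g ∂(lam (Gp.r g₀))

/-- Continuous compactly supported functions on the groupoid `Gp`. -/
def CcFun : Type := {F : Gp.G → ℂ // Continuous F ∧ HasCompactSupport F}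


section GroupoidActions

variable {Y : Type} [TopologicalSpace Y] (Gp : LCGroupoid Y)
variable (P : Type) [NormedAddCommGroup P] [NormedSpace ℂ P] [HilbertCzeroModule Y P]

/-- A continuous, unitary left action of the groupoid `Gp` on the Hilbert bundle `E_P`
associated to the Hilbert `C₀(Y)`-module `P`: this is the datum making `P` a
`G`-Hilbert module. -/
structure GAction where
  act : (g : Gp.G) → Fib Y P (Gp.s g) → Fib Y P (Gp.r g)
  act_add : ∀ (g : Gp.G) (v w : Fib Y P (Gp.s g)), act g (v + w) = act g v + act g w
  act_csmul : ∀ (g : Gp.G) (c : ℂ) (v : Fib Y P (Gp.s g)), act g (c • v) = c • act g v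
  act_norm : ∀ (g : Gp.G) (v : Fib Y P (Gp.s g)),
    fibNormQ Y P (Gp.r g) (act g v) = fibNormQ Y P (Gp.s g) v
  act_surjective : ∀ g : Gp.G, Function.Surjective (act g)
  act_unit : ∀ (y : Y) (v : Fib Y P y),
    act (Gp.unit y) (fcast Y P (Gp.s_unit y).symm v) = fcast Y P (Gp.r_unit y).symm v
  act_mul : ∀ (g h : Gp.G) (hc : Gp.s g = Gp.r h) (v : Fib Y P (Gp.s h)),
    act (Gp.mul g h) (fcast Y P (Gp.s_mul g h hc).symm v) =
      fcast Y P (Gp.r_mul g h hc).symm (act g (fcast Y P hc.symm (act h v)))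
  act_cont : @Continuous {q : Gp.G × TotalP Y P // Gp.s q.1 = q.2.1} (TotalP Y P)
    (@instTopologicalSpaceSubtype _ _ (@instTopologicalSpaceProd _ _ _ (topEP Y P)))
    (topEP Y P)
    (fun q => ⟨Gp.r q.1.1, act q.1.1 (fcast Y P q.2.symm q.1.2.2)⟩)

variable {Gp P}
variable {Q : Type} [NormedAddCommGroup Q] [NormedSpace ℂ Q] [HilbertCzeroModule Y Q]

/-- A `G`-equivariant unitary isomorphism of `G`-Hilbert modules:  a bijective,
`ℂ`-linear, `C₀(Y)`-linear, inner-product preserving map intertwining the `G`-actions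
on the associated Hilbert bundles. -/
def IsGEquivariantUnitary (T : P → Q) (AP : GAction Gp P) (AQ : GAction Gp Q) : Prop :=
  Function.Bijective T ∧
  (∀ p p' : P, T (p + p') = T p + T p') ∧
  (∀ (c : ℂ) (p : P), T (c • p) = c • T p) ∧
  (∀ (p : P) (f : C₀(Y, ℂ)), T (modSMul Y p f) = modSMul Y (T p) f) ∧
  (∀ p p' : P, modIP Y (T p) (T p') = modIP Y p p') ∧
  (∀ (g : Gp.G) (p p' : P),
      AP.act g (fibMk Y P (Gp.s g) p) = fibMk Y P (Gp.r g) p' →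
      AQ.act g (fibMk Y Q (Gp.s g) (T p)) = fibMk Y Q (Gp.r g) (T p'))

/-- Equivalence of `G`-Hilbert modules: existence of a `G`-equivariant unitary. -/
def GEquiv (AP : GAction Gp P) (AQ : GAction Gp Q) : Prop :=
  ∃ T : P → Q, IsGEquivariantUnitary T AP AQ

end GroupoidActions

section ModuleConstructions

variable {Y : Type} [TopologicalSpace Y] (Gp : LCGroupoid Y)

/-- Data exhibiting a Hilbert `C₀(Y)`-module `PG` as the completion `P_G` of the
pre-Hilbert `C₀(Y)`-module `C_c(G)`, with module action `F·f = F·(f∘r)` and inner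
product `⟨F₁,F₂⟩(y) = ∫_{G^y} conj F₁ · F₂ dλ^y`. -/
structure PGData (hs : HaarSystem Y Gp) (PG : Type) [NormedAddCommGroup PG]
    [NormedSpace ℂ PG] [HilbertCzeroModule Y PG] where
  emb : CcFun Y Gp → PG
  emb_add : ∀ F₁ F₂ F₃ : CcFun Y Gp, F₃.1 = F₁.1 + F₂.1 → emb F₃ = emb F₁ + emb F₂
  emb_csmul : ∀ (c : ℂ) (F₁ F₃ : CcFun Y Gp), F₃.1 = c • F₁.1 → emb F₃ = c • emb F₁
  emb_msmul : ∀ (F₁ F₃ : CcFun Y Gp) (f : C₀(Y, ℂ)),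
    F₃.1 = (fun g => F₁.1 g * f (Gp.r g)) → emb F₃ = modSMul Y (emb F₁) f
  emb_inner : ∀ (F₁ F₂ : CcFun Y Gp) (y : Y),
    modIP Y (emb F₁) (emb F₂) y = ∫ g, conj (F₁.1 g) * F₂.1 g ∂(hs.lam y)
  emb_dense : ∀ (p : PG) (ε : ℝ), 0 < ε → ∃ F : CcFun Y Gp, ‖p - emb F‖ < ε

variable {Gp}

/-- The natural left translation action of `G` on `L²(G) = E_{P_G}`, characterized on
the dense image of `C_c(G)` by `(g·ξ)(h) = ξ(g⁻¹h)` for `h ∈ G^{r(g)}`. -/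
def IsNaturalPGAction {hs : HaarSystem Y Gp} {PG : Type} [NormedAddCommGroup PG]
    [NormedSpace ℂ PG] [HilbertCzeroModule Y PG] (d : PGData Gp hs PG)
    (A : GAction Gp PG) : Prop :=
  ∀ (g : Gp.G) (F F' : CcFun Y Gp),
    (∀ h : Gp.G, Gp.r h = Gp.r g → F'.1 h = F.1 (Gp.mul (Gp.inv g) h)) →
    A.act g (fibMk Y PG (Gp.s g) (d.emb F)) = fibMk Y PG (Gp.r g) (d.emb F')

end ModuleConstructions

section TensorSum

/-- Data exhibiting `R` as the interior tensor product `P ⊗_{C₀(Y)} Q` of two Hilbert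
`C₀(Y)`-modules: a balanced bilinear map with dense span satisfying
`⟨p₁⊗q₁, p₂⊗q₂⟩ = ⟨p₁,p₂⟩⟨q₁,q₂⟩`. -/
structure TensorData (Y : Type) [TopologicalSpace Y] (P Q R : Type)
    [NormedAddCommGroup P] [NormedSpace ℂ P] [HilbertCzeroModule Y P]
    [NormedAddCommGroup Q] [NormedSpace ℂ Q] [HilbertCzeroModule Y Q]
    [NormedAddCommGroup R] [NormedSpace ℂ R] [HilbertCzeroModule Y R] where
  t : P → Q → R
  t_add_left : ∀ (p p' : P) (q : Q), t (p + p') q = t p q + t p' q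
  t_add_right : ∀ (p : P) (q q' : Q), t p (q + q') = t p q + t p q'
  t_csmul_left : ∀ (c : ℂ) (p : P) (q : Q), t (c • p) q = c • t p q
  t_csmul_right : ∀ (c : ℂ) (p : P) (q : Q), t p (c • q) = c • t p q
  t_msmul_left : ∀ (p : P) (q : Q) (f : C₀(Y, ℂ)), t (modSMul Y p f) q = modSMul Y (t p q) f
  t_msmul_right : ∀ (p : P) (q : Q) (f : C₀(Y, ℂ)), t p (modSMul Y q f) = modSMul Y (t p q) f
  t_inner : ∀ (p p' : P) (q q' : Q),
    modIP Y (t p q) (t p' q') = modIP Y p p' * modIP Y q q'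
  t_dense : ∀ (x : R) (ε : ℝ), 0 < ε →
    ∃ (n : ℕ) (ps : Fin n → P) (qs : Fin n → Q), ‖x - ∑ i, t (ps i) (qs i)‖ < ε

/-- Data exhibiting `S` as the Hilbert `C₀(Y)`-module direct sum `P ⊕ Q`. -/
structure SumData (Y : Type) [TopologicalSpace Y] (P Q S : Type)
    [NormedAddCommGroup P] [NormedSpace ℂ P] [HilbertCzeroModule Y P]
    [NormedAddCommGroup Q] [NormedSpace ℂ Q] [HilbertCzeroModule Y Q]
    [NormedAddCommGroup S] [NormedSpace ℂ S] [HilbertCzeroModule Y S] where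
  inl : P → S
  inr : Q → S
  inl_add : ∀ p p' : P, inl (p + p') = inl p + inl p'
  inr_add : ∀ q q' : Q, inr (q + q') = inr q + inr q'
  inl_csmul : ∀ (c : ℂ) (p : P), inl (c • p) = c • inl p
  inr_csmul : ∀ (c : ℂ) (q : Q), inr (c • q) = c • inr q
  inl_msmul : ∀ (p : P) (f : C₀(Y, ℂ)), inl (modSMul Y p f) = modSMul Y (inl p) f
  inr_msmul : ∀ (q : Q) (f : C₀(Y, ℂ)), inr (modSMul Y q f) = modSMul Y (inr q) f
  inner_ll : ∀ p p' : P, modIP Y (inl p) (inl p') = modIP Y p p'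
  inner_rr : ∀ q q' : Q, modIP Y (inr q) (inr q') = modIP Y q q'
  inner_lr : ∀ (p : P) (q : Q), modIP Y (inl p) (inr q) = 0
  total : ∀ x : S, ∃ (p : P) (q : Q), x = inl p + inr q

/-- Data exhibiting `S` as the Hilbert `C₀(Y)`-module direct sum `⊕_{i=1}^∞ P i` of a
sequence of Hilbert `C₀(Y)`-modules: the module of sequences `{p_i}`, `p_i ∈ P i`, with
`Σ_i ⟨p_i,p_i⟩` convergent in `C₀(Y)`. -/
structure InftySumData (Y : Type) [TopologicalSpace Y] (Pf : ℕ → Type) (S : Type)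
    [∀ i, NormedAddCommGroup (Pf i)] [∀ i, NormedSpace ℂ (Pf i)]
    [∀ i, HilbertCzeroModule Y (Pf i)]
    [NormedAddCommGroup S] [NormedSpace ℂ S] [HilbertCzeroModule Y S] where
  proj : (i : ℕ) → S → Pf i
  proj_add : ∀ (i : ℕ) (x x' : S), proj i (x + x') = proj i x + proj i x'
  proj_csmul : ∀ (i : ℕ) (c : ℂ) (x : S), proj i (c • x) = c • proj i x
  proj_msmul : ∀ (i : ℕ) (x : S) (f : C₀(Y, ℂ)),
    proj i (modSMul Y x f) = modSMul Y (proj i x) f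
  proj_inner : ∀ x x' : S, HasSum (fun i => modIP Y (proj i x) (proj i x')) (modIP Y x x')
  proj_injective : ∀ x x' : S, (∀ i, proj i x = proj i x') → x = x'
  proj_surjective : ∀ u : (i : ℕ) → Pf i, Summable (fun i => modIP Y (u i) (u i)) →
    ∃ x : S, ∀ i, proj i x = u i

variable {Y : Type} [TopologicalSpace Y] {Gp : LCGroupoid Y}
variable {P Q R S : Type}
  [NormedAddCommGroup P] [NormedSpace ℂ P] [HilbertCzeroModule Y P]
  [NormedAddCommGroup Q] [NormedSpace ℂ Q] [HilbertCzeroModule Y Q]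
  [NormedAddCommGroup R] [NormedSpace ℂ R] [HilbertCzeroModule Y R]
  [NormedAddCommGroup S] [NormedSpace ℂ S] [HilbertCzeroModule Y S]

/-- The diagonal `G`-action on a tensor product `P ⊗_{C₀(Y)} Q`. -/
def IsDiagonalAction (td : TensorData Y P Q R) (AP : GAction Gp P) (AQ : GAction Gp Q)
    (AR : GAction Gp R) : Prop :=
  ∀ (g : Gp.G) (p p' : P) (q q' : Q),
    AP.act g (fibMk Y P (Gp.s g) p) = fibMk Y P (Gp.r g) p' →
    AQ.act g (fibMk Y Q (Gp.s g) q) = fibMk Y Q (Gp.r g) q' →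
    AR.act g (fibMk Y R (Gp.s g) (td.t p q)) = fibMk Y R (Gp.r g) (td.t p' q')

/-- The coordinatewise `G`-action on a direct sum `P ⊕ Q`. -/
def IsCoordinateSumAction (sd : SumData Y P Q S) (AP : GAction Gp P) (AQ : GAction Gp Q)
    (AS : GAction Gp S) : Prop :=
  (∀ (g : Gp.G) (p p' : P),
    AP.act g (fibMk Y P (Gp.s g) p) = fibMk Y P (Gp.r g) p' →
    AS.act g (fibMk Y S (Gp.s g) (sd.inl p)) = fibMk Y S (Gp.r g) (sd.inl p')) ∧
  (∀ (g : Gp.G) (q q' : Q),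
    AQ.act g (fibMk Y Q (Gp.s g) q) = fibMk Y Q (Gp.r g) q' →
    AS.act g (fibMk Y S (Gp.s g) (sd.inr q)) = fibMk Y S (Gp.r g) (sd.inr q'))

/-- The coordinatewise `G`-action on an infinite direct sum `⊕_{i=1}^∞ P i`. -/
def IsCoordinateInftyAction {Pf : ℕ → Type} [∀ i, NormedAddCommGroup (Pf i)]
    [∀ i, NormedSpace ℂ (Pf i)] [∀ i, HilbertCzeroModule Y (Pf i)]
    (d : InftySumData Y Pf S) (Af : (i : ℕ) → GAction Gp (Pf i))
    (AS : GAction Gp S) : Prop :=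
  ∀ (g : Gp.G) (x x' : S),
    AS.act g (fibMk Y S (Gp.s g) x) = fibMk Y S (Gp.r g) x' →
    ∀ i, (Af i).act g (fibMk Y (Pf i) (Gp.s g) (d.proj i x)) =
      fibMk Y (Pf i) (Gp.r g) (d.proj i x')

end TensorSum


section PullbackSections

variable {Y : Type} [TopologicalSpace Y] {Gp : LCGroupoid Y}

/-- A continuous compactly supported section of the pull-back bundle `r*E_P`:
a continuous compactly supported map `φ : G → E_P` with `φ(g) ∈ (E_P)_{r(g)}`. -/
def CcPullbackSection (P : Type) [NormedAddCommGroup P] [NormedSpace ℂ P]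
    [HilbertCzeroModule Y P] (φ : (g : Gp.G) → Fib Y P (Gp.r g)) : Prop :=
  (@Continuous Gp.G (TotalP Y P) _ (topEP Y P) fun g => ⟨Gp.r g, φ g⟩) ∧
  ∃ K : Set Gp.G, IsCompact K ∧ ∀ g ∉ K, φ g = 0

/-- `φ̂ = Fs`:  the section `Fs` of `E_{P ⊗ P_G}` (whose fiber at `y` is
`L²(G^y, E_y)`) is the image `φ̂(y) = φ|_{G^y}` of `φ ∈ C_c(G, r*E_P)`, in the sense
that `φ` and `Fs` admit the same approximations by finite sums `Σᵢ ĥᵢ ⊗ p̂ᵢ`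
(`hᵢ ∈ C_c(G)`, `pᵢ ∈ P`), uniformly in `y`: the distance from `φ_y` being measured in
`L²(G^y, E_y)` and the distance from `Fs y` in the fiber of `E_{P ⊗ P_G}`. -/
def RepresentsHat (hs : HaarSystem Y Gp)
    (P : Type) [NormedAddCommGroup P] [NormedSpace ℂ P] [HilbertCzeroModule Y P]
    (PG : Type) [NormedAddCommGroup PG] [NormedSpace ℂ PG] [HilbertCzeroModule Y PG]
    (R : Type) [NormedAddCommGroup R] [NormedSpace ℂ R] [HilbertCzeroModule Y R]
    (td : TensorData Y P PG R) (d : PGData Gp hs PG)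
    (φ : (g : Gp.G) → Fib Y P (Gp.r g)) (Fs : (y : Y) → Fib Y R y) : Prop :=
  Fs ∈ C0SectionsP Y R ∧
  ∀ ε : ℝ, 0 < ε → ∃ (n : ℕ) (h : Fin n → CcFun Y Gp) (p : Fin n → P),
    (∀ y : Y,
      (∫ g, (fibNormQ Y P (Gp.r g)
        (φ g - ∑ i, (h i).1 g • fibMk Y P (Gp.r g) (p i))) ^ 2 ∂(hs.lam y)) ≤ ε ^ 2) ∧
    (∀ y : Y,
      fibNormQ Y R y (Fs y - fibMk Y R y (∑ i, td.t (p i) (d.emb (h i)))) ≤ ε)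

end PullbackSections

section PullbackDensity

open MeasureTheory

/-! ### The seminorms on the fibres -/

section Fibers

variable {Y : Type} [TopologicalSpace Y]
variable {P : Type} [NormedAddCommGroup P] [NormedSpace ℂ P] [HilbertCzeroModule Y P]

lemma modIP_add_right (y : Y) (p q r : P) :
    modIP Y p (q + r) y = modIP Y p q y + modIP Y p r y := by
  simp [modIP, HilbertCzeroModule.minner_add_right]

lemma modIP_smul_right (y : Y) (c : ℂ) (p q : P) :
    modIP Y p (c • q) y = c * modIP Y p q y := by
  simp [modIP, HilbertCzeroModule.minner_csmul_right]

lemma modIP_conj (y : Y) (p q : P) : conj (modIP Y q p y) = modIP Y p q y := by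
  simp only [modIP]
  rw [HilbertCzeroModule.minner_conj p q]
  rfl

lemma modIP_add_left (y : Y) (p q r : P) :
    modIP Y (p + q) r y = modIP Y p r y + modIP Y q r y := by
  rw [← modIP_conj, modIP_add_right, map_add, modIP_conj, modIP_conj]

lemma modIP_smul_left (y : Y) (c : ℂ) (p q : P) :
    modIP Y (c • p) q y = conj c * modIP Y p q y := by
  rw [← modIP_conj, modIP_smul_right, map_mul, modIP_conj]

lemma modIP_sum_smul {ι κ : Type} (s : Finset ι) (t : Finset κ) (y : Y) (a : ι → ℂ) (b : κ → ℂ)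
    (p : ι → P) (q : κ → P) :
    modIP Y (∑ i ∈ s, a i • p i) (∑ j ∈ t, b j • q j) y =
      ∑ i ∈ s, ∑ j ∈ t, conj (a i) * b j * modIP Y (p i) (q j) y := by
  classical
  have h0r : ∀ p : P, modIP Y p 0 y = 0 := fun p => by
    simpa using modIP_smul_right y 0 p (0 : P)
  have h0l : ∀ p : P, modIP Y 0 p y = 0 := fun p => by
    simpa using modIP_smul_left y 0 (0 : P) p
  have hr : ∀ x : P, modIP Y x (∑ j ∈ t, b j • q j) y = ∑ j ∈ t, b j * modIP Y x (q j) y := by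
    intro x
    induction t using Finset.induction_on with
    | empty => simp [h0r]
    | insert j t hj ih =>
      rw [Finset.sum_insert hj, Finset.sum_insert hj, modIP_add_right, modIP_smul_right, ih]
  induction s using Finset.induction_on with
  | empty => simp [h0l]
  | insert i s hi ih =>
    rw [Finset.sum_insert hi, Finset.sum_insert hi, modIP_add_left, modIP_smul_left, ih, hr,
      Finset.mul_sum]
    simp only [mul_assoc]

/-- The positive semidefinite form `⟨p, q⟩(y)` on `P` obtained by evaluation at `y`. -/
@[reducible] def fibCore (y : Y) : PreInnerProductSpace.Core ℂ P where
  inner p q := modIP Y p q y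
  conj_inner_symm p q := modIP_conj y p q
  re_inner_nonneg p := HilbertCzeroModule.minner_self_re_nonneg p y
  add_left p q r := modIP_add_left y p q r
  smul_left p q c := modIP_smul_left y c p q

/-- `fibNormRep` at `y`, as a seminorm on `P`. -/
def repSeminorm (y : Y) : Seminorm ℂ P :=
  letI c : PreInnerProductSpace.Core ℂ P := fibCore y
  Seminorm.of (fibNormRep Y P y)
    (fun p q =>
      @norm_add_le P
        (@InnerProductSpace.Core.toSeminormedAddCommGroup ℂ P _ _ _ c).toSeminormedAddGroup p q)
    (fun a p => by
      have h : (modIP Y (a • p) (a • p) y).re = ‖a‖ ^ 2 * (modIP Y p p y).re := by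
        rw [modIP_smul_left, modIP_smul_right, ← mul_assoc, Complex.conj_mul', ← Complex.ofReal_pow,
          Complex.re_ofReal_mul]
      rw [fibNormRep, h, Real.sqrt_mul (sq_nonneg _), Real.sqrt_sq (norm_nonneg _), fibNormRep])

lemma repSeminorm_apply (y : Y) (p : P) : repSeminorm y p = fibNormRep Y P y p := rfl

lemma fibNormRep_nonneg (y : Y) (p : P) : 0 ≤ fibNormRep Y P y p := Real.sqrt_nonneg _

lemma fibNormRep_sq (y : Y) (p : P) : fibNormRep Y P y p ^ 2 = (modIP Y p p y).re :=
  Real.sq_sqrt (HilbertCzeroModule.minner_self_re_nonneg p y)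

lemma modIP_msmul_right (y : Y) (p q : P) (f : C₀(Y, ℂ)) :
    modIP Y p (modSMul Y q f) y = modIP Y p q y * f y := by
  simp [modIP, modSMul, HilbertCzeroModule.minner_msmul_right]

/-- The fibre norm vanishes on `I_y P`, hence depends only on the class in `P / I_y P`. -/
lemma fibNormRep_eq_zero_of_mem (y : Y) {p : P} (hp : p ∈ fiberIdeal Y P y) :
    fibNormRep Y P y p = 0 := by
  have hle : fiberIdeal Y P y ≤
      { carrier := {p | repSeminorm y p = 0}
        add_mem' := fun {a b} ha hb => le_antisymm
          ((map_add_le_add _ a b).trans (by simp_all)) (apply_nonneg _ _)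
        zero_mem' := map_zero _
        smul_mem' := fun c x hx => by
          simp only [Set.mem_ofPred_eq] at hx ⊢
          rw [map_smul_eq_mul, hx, mul_zero] : Submodule ℂ P } := by
    refine Submodule.span_le.2 ?_
    rintro x ⟨f, q, hf, rfl⟩
    change fibNormRep Y P y _ = 0
    rw [fibNormRep, modIP_msmul_right, hf]
    simp
  exact hle hp

lemma fibNormQ_mk (y : Y) (p : P) : fibNormQ Y P y (fibMk Y P y p) = fibNormRep Y P y p := by
  have : {r | ∃ q : P, fibMk Y P y p = fibMk Y P y q ∧ r = fibNormRep Y P y q} =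
      {fibNormRep Y P y p} := by
    ext r
    constructor
    · rintro ⟨q, hq, rfl⟩
      have hm := fibNormRep_eq_zero_of_mem y ((Submodule.Quotient.eq _).1 hq)
      have h := abs_sub_map_le_sub (repSeminorm y) p q
      rw [repSeminorm_apply y (p - q), hm] at h
      have h' := abs_eq_zero.1 (le_antisymm h (abs_nonneg _))
      exact (sub_eq_zero.1 h').symm
    · rintro rfl
      exact ⟨p, rfl, rfl⟩
  rw [fibNormQ, this, csInf_singleton]

lemma fibMk_surjective (y : Y) : Function.Surjective (fibMk Y P y) :=
  Submodule.Quotient.mk_surjective _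

lemma fibMk_sub (y : Y) (p q : P) : fibMk Y P y (p - q) = fibMk Y P y p - fibMk Y P y q := rfl

lemma fibMk_smul (y : Y) (c : ℂ) (p : P) : fibMk Y P y (c • p) = c • fibMk Y P y p := rfl

lemma fibMk_sum {ι : Type} (s : Finset ι) (y : Y) (p : ι → P) :
    fibMk Y P y (∑ i ∈ s, p i) = ∑ i ∈ s, fibMk Y P y (p i) :=
  map_sum (fiberIdeal Y P y).mkQ p s

/-- `fibNormQ` at `y`, as a seminorm on the fibre `P / I_y P`. -/
def fibSeminorm (y : Y) : Seminorm ℂ (Fib Y P y) :=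
  Seminorm.of (fibNormQ Y P y)
    (fun v w => by
      obtain ⟨p, rfl⟩ := fibMk_surjective y v
      obtain ⟨q, rfl⟩ := fibMk_surjective y w
      have : fibMk Y P y p + fibMk Y P y q = fibMk Y P y (p + q) := rfl
      rw [this, fibNormQ_mk, fibNormQ_mk, fibNormQ_mk]
      exact map_add_le_add (repSeminorm y) p q)
    (fun c v => by
      obtain ⟨p, rfl⟩ := fibMk_surjective y v
      rw [← fibMk_smul, fibNormQ_mk, fibNormQ_mk]
      exact map_smul_eq_mul (repSeminorm y) c p)

lemma fibSeminorm_apply (y : Y) (v : Fib Y P y) : fibSeminorm y v = fibNormQ Y P y v := rfl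

lemma fibSeminorm_mk (y : Y) (p : P) : fibSeminorm y (fibMk Y P y p) = fibNormRep Y P y p :=
  fibNormQ_mk y p

lemma fibNormRep_le_norm (y : Y) (p : P) : fibNormRep Y P y p ≤ ‖p‖ := by
  rw [HilbertCzeroModule.norm_eq (Y := Y) p]
  refine Real.sqrt_le_sqrt ?_
  refine (Complex.re_le_norm _).trans ?_
  exact (modIP Y p p).toBCF.norm_coe_le_norm y

lemma norm_le_of_fibNormRep_le {p : P} {c : ℝ} (hc : 0 ≤ c)
    (h : ∀ y : Y, fibNormRep Y P y p ≤ c) : ‖p‖ ≤ c := by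
  rw [HilbertCzeroModule.norm_eq (Y := Y) p, Real.sqrt_le_left hc]
  have : ‖(modIP Y p p).toBCF‖ ≤ c ^ 2 := by
    refine (BoundedContinuousFunction.norm_le (sq_nonneg c)).2 fun y => ?_
    have him : (modIP Y p p y).im = 0 := HilbertCzeroModule.minner_self_im p y
    have hre : modIP Y p p y = ((modIP Y p p y).re : ℂ) := by
      apply Complex.ext <;> simp [him]
    change ‖modIP Y p p y‖ ≤ c ^ 2
    rw [hre, ← fibNormRep_sq, Complex.norm_real, Real.norm_of_nonneg (sq_nonneg _)]
    exact pow_le_pow_left₀ (Real.sqrt_nonneg _) (h y) 2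
  exact this

/-! ### Continuity of sections of `E_P` -/

/-- The fibre norm is jointly continuous in the base point and the representative: it is
continuous in `y` for a fixed representative, and `1`-Lipschitz in the representative. -/
lemma continuous_fibNormRep {X : Type} [TopologicalSpace X] {ρ : X → Y} (hρ : Continuous ρ)
    {w : X → P} (hw : Continuous w) : Continuous fun x => fibNormRep Y P (ρ x) (w x) := by
  rw [continuous_iff_continuousAt]
  intro x₀
  have h1 : Continuous fun x => fibNormRep Y P (ρ x) (w x₀) :=
    Real.continuous_sqrt.comp (Complex.continuous_re.comp ((map_continuous (modIP Y _ _)).comp hρ))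
  have h2 : Tendsto (fun x => fibNormRep Y P (ρ x) (w x) - fibNormRep Y P (ρ x) (w x₀))
      (𝓝 x₀) (𝓝 0) := by
    have h3 : Tendsto (fun x => ‖w x - w x₀‖) (𝓝 x₀) (𝓝 0) := by
      have := ((hw.sub continuous_const).norm : Continuous fun x => ‖w x - w x₀‖).tendsto x₀
      simpa using this
    refine squeeze_zero_norm (fun x => ?_) h3
    exact (abs_sub_map_le_sub (repSeminorm (ρ x)) (w x) (w x₀)).trans (fibNormRep_le_norm _ _)
  have h4 := h2.add (h1.tendsto x₀)
  simpa [ContinuousAt] using h4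

lemma continuous_mk_topEP {X : Type} [TopologicalSpace X] {ρ : X → Y} (hρ : Continuous ρ)
    {w : X → P} (hw : Continuous w) :
    @Continuous X (TotalP Y P) _ (topEP Y P) fun x => ⟨ρ x, fibMk Y P (ρ x) (w x)⟩ := by
  refine continuous_generateFrom_iff.2 ?_
  rintro _ ⟨U, p, ε, hU, -, rfl⟩
  have : (fun x => (⟨ρ x, fibMk Y P (ρ x) (w x)⟩ : TotalP Y P)) ⁻¹'
      {e : TotalP Y P | e.1 ∈ U ∧ fibNormQ Y P e.1 (e.2 - fibMk Y P e.1 p) < ε} =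
      ρ ⁻¹' U ∩ {x | fibNormRep Y P (ρ x) (w x - p) < ε} := by
    ext x
    simp only [Set.mem_preimage, Set.mem_ofPred_eq, Set.mem_inter_iff, ← fibMk_sub, fibNormQ_mk]
  rw [this]
  exact (hU.preimage hρ).inter
    (isOpen_lt (continuous_fibNormRep hρ (hw.sub continuous_const)) continuous_const)

lemma hatSec_mem_C0SectionsP (p : P) : hatSec Y P p ∈ C0SectionsP Y P := by
  refine ⟨continuous_mk_topEP continuous_id continuous_const, ?_⟩
  have h : Tendsto (fun y => modIP Y p p y) (cocompact Y) (𝓝 0) := (modIP Y p p).zero_at_infty'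
  have h2 := (Real.continuous_sqrt.comp Complex.continuous_re).tendsto (0 : ℂ) |>.comp h
  simpa [hatSec, fibNormQ_mk, fibNormRep, Function.comp_def] using h2

/-- The fibre map is `C₀(Y)`-linear up to a vector of norm zero. -/
lemma fibSeminorm_msmul_sub (y : Y) (p : P) (f : C₀(Y, ℂ)) :
    fibSeminorm y (fibMk Y P y (modSMul Y p f) - f y • fibMk Y P y p) = 0 := by
  rw [← fibMk_smul, ← fibMk_sub, fibSeminorm_mk, fibNormRep]
  have h : ∀ q : P, modIP Y q (modSMul Y p f - f y • p) y = 0 := by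
    intro q
    rw [sub_eq_add_neg, ← neg_smul, modIP_add_right, modIP_smul_right, modIP_msmul_right]
    ring
  rw [h]
  simp

/-! ### Uniform approximation by partitions of unity -/

/-- A continuous section along `ρ` that is at most `δ` off a compact set is within `δ` of a
finite combination `∑ fᵢ p̂ᵢ` with coefficients in `C_c(X)`: near each point of the compact set
it is within `δ` of some `p̂`, and the local choices are glued with a partition of unity. -/
lemma exists_partition_approx {X : Type} [TopologicalSpace X] [T2Space X] [LocallyCompactSpace X]
    {ρ : X → Y} {φ : (x : X) → Fib Y P (ρ x)}
    (hφ : @Continuous X (TotalP Y P) _ (topEP Y P) fun x => ⟨ρ x, φ x⟩)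
    {K : Set X} (hK : IsCompact K) {δ : ℝ} (hδ : 0 < δ)
    (hsmall : ∀ x ∉ K, fibNormQ Y P (ρ x) (φ x) ≤ δ) :
    ∃ (n : ℕ) (f : Fin n → C(X, ℝ)) (p : Fin n → P), (∀ i, HasCompactSupport (f i)) ∧
      ∀ x, fibNormQ Y P (ρ x) (φ x - ∑ i, ((f i x : ℝ) : ℂ) • fibMk Y P (ρ x) (p i)) ≤ δ := by
  choose q hq using fun x => fibMk_surjective (ρ x) (φ x)
  set U : X → Set X := fun x => {z | fibNormQ Y P (ρ z) (φ z - fibMk Y P (ρ z) (q x)) < δ}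
  have hUo : ∀ x, IsOpen (U x) := by
    intro x
    have := continuous_generateFrom_iff.1 hφ _ ⟨Set.univ, q x, δ, isOpen_univ, hδ, rfl⟩
    simpa [U, Set.preimage] using this
  have hUx : ∀ x, x ∈ U x := by
    intro x
    change fibSeminorm (ρ x) _ < δ
    rw [hq, sub_self, map_zero]
    exact hδ
  obtain ⟨t, -, ht⟩ := hK.elim_nhds_subcover U fun x _ => (hUo x).mem_nhds (hUx x)
  let e := t.equivFin
  have hcov : K ⊆ ⋃ i : Fin t.card, U (e.symm i) := by
    intro x hx
    obtain ⟨z, hz, hxz⟩ := Set.mem_iUnion₂.1 (ht hx)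
    exact Set.mem_iUnion.2 ⟨e ⟨z, hz⟩, by simpa using hxz⟩
  obtain ⟨f, hfU, hf1, hf01, hfc⟩ :=
    exists_continuous_sum_one_of_isOpen_isCompact (fun i => hUo (e.symm i)) hK hcov
  -- dividing by `max 1 (∑ fⱼ)` makes the total weight at most one off `K` as well
  let m : C(X, ℝ) := ⟨fun x => max 1 (∑ j, f j x), by fun_prop⟩
  have hm1 : ∀ x, 1 ≤ m x := fun x => le_max_left _ _
  have hm0 : ∀ x, 0 < m x := fun x => one_pos.trans_le (hm1 x)
  let g : Fin t.card → C(X, ℝ) := fun i =>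
    ⟨fun x => f i x / m x, (f i).continuous.div m.continuous fun x => (hm0 x).ne'⟩
  have hg0 : ∀ i x, 0 ≤ g i x := fun i x => div_nonneg (hf01 i x).1 (hm0 x).le
  have hgsum : ∀ x, ∑ i, g i x = (∑ i, f i x) / m x := fun x => (Finset.sum_div _ _ _).symm
  have hgle : ∀ x, ∑ i, g i x ≤ 1 := fun x => by
    rw [hgsum, div_le_one (hm0 x)]
    exact le_max_right _ _
  have hgK : ∀ x ∈ K, ∑ i, g i x = 1 := fun x hx => by
    have h1 : ∑ i, f i x = 1 := by simpa using hf1 hx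
    have h2 : m x = 1 := by
      change max 1 (∑ j, f j x) = 1
      rw [h1, max_self]
    rw [hgsum, h1, h2, div_one]
  refine ⟨t.card, g, fun i => q (e.symm i), fun i => ?_, fun x => ?_⟩
  · refine (hfc i).mono fun x hx => ?_
    rw [Function.mem_support] at hx ⊢
    intro h0
    exact hx (by simp [g, h0])
  · have hsplit : φ x - ∑ i, ((g i x : ℝ) : ℂ) • fibMk Y P (ρ x) (q (e.symm i)) =
        ((1 - ∑ i, g i x : ℝ) : ℂ) • φ x +
          ∑ i, ((g i x : ℝ) : ℂ) • (φ x - fibMk Y P (ρ x) (q (e.symm i))) := by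
      simp only [smul_sub, Finset.sum_sub_distrib, ← Finset.sum_smul]
      push_cast
      rw [sub_smul, one_smul]
      abel
    have h1 : fibSeminorm (ρ x) (((1 - ∑ i, g i x : ℝ) : ℂ) • φ x) ≤ (1 - ∑ i, g i x) * δ := by
      rw [map_smul_eq_mul, Complex.norm_real, Real.norm_of_nonneg (sub_nonneg.2 (hgle x))]
      by_cases hx : x ∈ K
      · rw [hgK x hx]
        simp
      · exact mul_le_mul_of_nonneg_left (hsmall x hx) (sub_nonneg.2 (hgle x))
    have h2 : ∀ i, fibSeminorm (ρ x)
        (((g i x : ℝ) : ℂ) • (φ x - fibMk Y P (ρ x) (q (e.symm i)))) ≤ g i x * δ := by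
      intro i
      rw [map_smul_eq_mul, Complex.norm_real, Real.norm_of_nonneg (hg0 i x)]
      by_cases hfx : f i x = 0
      · have : g i x = 0 := by simp [g, hfx]
        simp [this]
      · exact mul_le_mul_of_nonneg_left (hfU i (subset_tsupport _ hfx)).le (hg0 i x)
    have h3 : fibSeminorm (ρ x) (∑ i, ((g i x : ℝ) : ℂ) •
        (φ x - fibMk Y P (ρ x) (q (e.symm i)))) ≤ ∑ i, g i x * δ :=
      (Finset.le_sum_of_subadditive (fibSeminorm (ρ x)) (map_zero _).le
        (fun a b => map_add_le_add _ a b) _ _).trans (Finset.sum_le_sum fun i _ => h2 i)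
    change fibSeminorm (ρ x) _ ≤ δ
    rw [hsplit]
    refine (map_add_le_add _ _ _).trans ((add_le_add h1 h3).trans (le_of_eq ?_))
    rw [← Finset.sum_mul]
    ring

/-- Sections of the form `p̂` are uniformly dense in `C₀(Y, E_P)`. -/
lemma exists_hatSec_approx [T2Space Y] [LocallyCompactSpace Y]
    {F : (y : Y) → Fib Y P y} (hF : F ∈ C0SectionsP Y P) {ε : ℝ} (hε : 0 < ε) :
    ∃ p : P, ∀ y, fibNormQ Y P y (F y - fibMk Y P y p) ≤ ε := by
  obtain ⟨hc, h0⟩ := hF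
  obtain ⟨K, hK, hKs⟩ := mem_cocompact.1 (h0.eventually (ge_mem_nhds hε))
  obtain ⟨n, f, p, hf, hfp⟩ := exists_partition_approx (ρ := id) hc hK hε fun y hy => hKs hy
  let fc : Fin n → C₀(Y, ℂ) := fun i =>
    ⟨⟨fun y => ((f i y : ℝ) : ℂ), by fun_prop⟩,
      ((hf i).comp_left (g := fun x : ℝ => (x : ℂ)) Complex.ofReal_zero).is_zero_at_infty⟩
  refine ⟨∑ i, modSMul Y (p i) (fc i), fun y => ?_⟩
  have hnull : fibSeminorm y (∑ i, (fibMk Y P y (modSMul Y (p i) (fc i)) -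
      fc i y • fibMk Y P y (p i))) ≤ 0 :=
    (Finset.le_sum_of_subadditive (fibSeminorm y) (map_zero _).le
      (fun a b => map_add_le_add _ a b) _ _).trans
        (Finset.sum_nonpos fun i _ => (fibSeminorm_msmul_sub y (p i) (fc i)).le)
  have hsplit : F y - fibMk Y P y (∑ i, modSMul Y (p i) (fc i)) =
      (F y - ∑ i, fc i y • fibMk Y P y (p i)) - ∑ i, (fibMk Y P y (modSMul Y (p i) (fc i)) -
      fc i y • fibMk Y P y (p i)) := by
    rw [fibMk_sum, Finset.sum_sub_distrib]
    abel
  change fibSeminorm y _ ≤ ε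
  rw [hsplit]
  have h := (map_sub_le_add (fibSeminorm y) (F y - ∑ i, fc i y • fibMk Y P y (p i))
    (∑ i, (fibMk Y P y (modSMul Y (p i) (fc i)) - fc i y • fibMk Y P y (p i))))
  have h' : fibSeminorm y (F y - ∑ i, fc i y • fibMk Y P y (p i)) ≤ ε := hfp y
  linarith

end Fibers

/-! ### Elementary tensors and the `L²` norm -/

section Tensors

variable {Y : Type} [TopologicalSpace Y] {Gp : LCGroupoid Y} {hs : HaarSystem Y Gp}
variable {P : Type} [NormedAddCommGroup P] [NormedSpace ℂ P] [HilbertCzeroModule Y P]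
variable {PG : Type} [NormedAddCommGroup PG] [NormedSpace ℂ PG] [HilbertCzeroModule Y PG]
variable {R : Type} [NormedAddCommGroup R] [NormedSpace ℂ R] [HilbertCzeroModule Y R]

lemma haar_integrable (hs : HaarSystem Y Gp) (y : Y) {E : Type} [NormedAddCommGroup E]
    {F : Gp.G → E} (hF : Continuous F) (hF' : HasCompactSupport F) : Integrable F (hs.lam y) :=
  haveI : IsFiniteMeasureOnCompacts (hs.lam y) :=
    ⟨fun K hK => (hs.finiteOnCompacts y K hK).lt_top⟩
  hF.integrable_of_hasCompactSupport hF'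

lemma haar_ae_r_eq (hs : HaarSystem Y Gp) (y : Y) : ∀ᵐ g ∂(hs.lam y), Gp.r g = y :=
  hs.concentrated y

/-- The fibre of `P ⊗ P_G` at `y` carries the norm of `L²(G^y, E_y)`. -/
lemma fibNormRep_tensor_sq (td : TensorData Y P PG R) (d : PGData Gp hs PG)
    {ι : Type} [Fintype ι] (h : ι → CcFun Y Gp) (p : ι → P) (y : Y) :
    fibNormRep Y R y (∑ i, td.t (p i) (d.emb (h i))) ^ 2 =
      ∫ g, fibNormRep Y P (Gp.r g) (∑ i, (h i).1 g • p i) ^ 2 ∂(hs.lam y) := by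
  have hint : ∀ i j, Integrable (fun g => conj ((h i).1 g) * (h j).1 g * modIP Y (p i) (p j) y)
      (hs.lam y) := fun i j =>
    (haar_integrable hs y (((Complex.continuous_conj.comp (h i).2.1).mul (h j).2.1))
      ((h j).2.2.mul_left)).mul_const _
  have hR : ∫ g, fibNormRep Y P (Gp.r g) (∑ i, (h i).1 g • p i) ^ 2 ∂(hs.lam y) =
      ∫ g, (∑ i, ∑ j, conj ((h i).1 g) * (h j).1 g * modIP Y (p i) (p j) y).re ∂(hs.lam y) := by
    refine integral_congr_ae ?_
    filter_upwards [haar_ae_r_eq hs y] with g hg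
    rw [hg, fibNormRep_sq, modIP_sum_smul]
  have hre := integral_re (𝕜 := ℂ) (μ := hs.lam y)
    (f := fun g => ∑ i, ∑ j, conj ((h i).1 g) * (h j).1 g * modIP Y (p i) (p j) y)
    (integrable_finsetSum _ fun i _ => integrable_finsetSum _ fun j _ => hint i j)
  have hL : modIP Y (∑ i, td.t (p i) (d.emb (h i))) (∑ i, td.t (p i) (d.emb (h i))) y =
      ∑ i, ∑ j, modIP Y (td.t (p i) (d.emb (h i))) (td.t (p j) (d.emb (h j))) y := by
    simpa using modIP_sum_smul Finset.univ Finset.univ y (fun _ => 1) (fun _ => 1)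
      (fun i => td.t (p i) (d.emb (h i))) (fun i => td.t (p i) (d.emb (h i)))
  rw [hR, fibNormRep_sq, hL]
  refine Eq.trans ?_ hre.symm
  change Complex.re _ = Complex.re _
  congr 1
  rw [integral_finsetSum _ fun i _ => integrable_finsetSum _ fun j _ => hint i j]
  refine Finset.sum_congr rfl fun i _ => ?_
  rw [integral_finsetSum _ fun j _ => hint i j]
  refine Finset.sum_congr rfl fun j _ => ?_
  rw [integral_mul_const, td.t_inner, ← d.emb_inner, ZeroAtInftyContinuousMap.mul_apply, mul_comm]

/-- Difference form of `fibNormRep_tensor_sq`. -/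
lemma fibNormRep_tensor_sub_sq (td : TensorData Y P PG R) (d : PGData Gp hs PG)
    {ι κ : Type} [Fintype ι] [Fintype κ] (h : ι → CcFun Y Gp) (p : ι → P)
    (k : κ → CcFun Y Gp) (q : κ → P) (y : Y) :
    fibNormRep Y R y (∑ i, td.t (p i) (d.emb (h i)) - ∑ j, td.t (q j) (d.emb (k j))) ^ 2 =
      ∫ g, fibNormRep Y P (Gp.r g) (∑ i, (h i).1 g • p i - ∑ j, (k j).1 g • q j) ^ 2
        ∂(hs.lam y) := by
  have hneg : ∀ (x : P) (z : PG), td.t (-x) z = -td.t x z := fun x z => by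
    simpa using td.t_csmul_left (-1) x z
  have := fibNormRep_tensor_sq td d (Sum.elim h k) (Sum.elim p fun j => -q j) y
  simpa [hneg, sub_eq_add_neg] using this

/-- The mass of `λ^y`, weighted by a function in `C_c(G)`, is bounded uniformly in `y`. -/
lemma haar_integral_bound (hs : HaarSystem Y Gp) {F : Gp.G → ℝ} (hF : Continuous F)
    (hF' : HasCompactSupport F) : ∃ C : ℝ, 0 ≤ C ∧ ∀ y, ∫ g, F g ∂(hs.lam y) ≤ C := by
  have hc : Continuous fun y => ∫ g, ((F g : ℝ) : ℂ) ∂(hs.lam y) :=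
    hs.integral_continuous (fun g => ((F g : ℝ) : ℂ)) (Complex.continuous_ofReal.comp hF)
      (hF'.comp_left (g := fun x : ℝ => (x : ℂ)) Complex.ofReal_zero)
  have hK : IsCompact (Gp.r '' tsupport F) := IsCompact.image hF' Gp.r_cont
  obtain ⟨C, hC⟩ := hK.exists_bound_of_continuousOn hc.continuousOn
  refine ⟨max C 0, le_max_right _ _, fun y => ?_⟩
  by_cases hy : y ∈ Gp.r '' tsupport F
  · have := hC y hy
    rw [integral_complex_ofReal, Complex.norm_real] at this
    exact (le_abs_self _).trans (this.trans (le_max_left _ _))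
  · have : ∫ g, F g ∂(hs.lam y) = 0 := by
      refine integral_eq_zero_of_ae ?_
      filter_upwards [haar_ae_r_eq hs y] with g hg
      exact image_eq_zero_of_notMem_tsupport fun hg' => hy ⟨g, hg', hg⟩
    rw [this]
    exact le_max_right _ _

lemma continuous_sum_smul {n : ℕ} (h : Fin n → CcFun Y Gp) (p : Fin n → P) :
    Continuous fun g => ∑ i, (h i).1 g • p i :=
  continuous_finsetSum _ fun i _ => (h i).2.1.smul continuous_const

lemma fibMk_sum_smul {n : ℕ} (h : Fin n → CcFun Y Gp) (p : Fin n → P) (g : Gp.G) (y : Y) :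
    fibMk Y P y (∑ i, (h i).1 g • p i) = ∑ i, (h i).1 g • fibMk Y P y (p i) := by
  rw [fibMk_sum]
  rfl

lemma ccPullbackSection_sum {n : ℕ} (h : Fin n → CcFun Y Gp) (p : Fin n → P) :
    CcPullbackSection (Gp := Gp) P fun g => ∑ i, (h i).1 g • fibMk Y P (Gp.r g) (p i) := by
  constructor
  · have := continuous_mk_topEP Gp.r_cont (continuous_sum_smul h p)
    simpa only [fibMk_sum_smul] using this
  · refine ⟨⋃ i, tsupport (h i).1, isCompact_iUnion fun i => (h i).2.2, fun g hg => ?_⟩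
    refine Finset.sum_eq_zero fun i _ => ?_
    rw [image_eq_zero_of_notMem_tsupport fun hi => hg (Set.mem_iUnion.2 ⟨i, hi⟩), zero_smul]

/-- A finite sum of elementary tensors represents the corresponding section of `r*E`. -/
lemma representsHat_sum (td : TensorData Y P PG R) (d : PGData Gp hs PG) {n : ℕ}
    (h : Fin n → CcFun Y Gp) (p : Fin n → P) :
    RepresentsHat hs P PG R td d (fun g => ∑ i, (h i).1 g • fibMk Y P (Gp.r g) (p i))
      (fun y => fibMk Y R y (∑ i, td.t (p i) (d.emb (h i)))) := by
  refine ⟨hatSec_mem_C0SectionsP _, fun ε hε => ⟨n, h, p, fun y => ?_, fun y => ?_⟩⟩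
  · have h0 : ∀ y : Y, fibNormQ Y P y 0 = 0 := fun y => map_zero (fibSeminorm y)
    simp only [sub_self, h0]
    simpa using sq_nonneg ε
  · rw [sub_self]
    exact (map_zero (fibSeminorm y)).le.trans hε.le

/-- Approximation of a section in `C_c(G, r*E)` by elementary tensors, with error controlled by
one fixed bump function `B`, so that the supports of the approximants stay in a fixed compact
set. -/
lemma exists_tensor_approx {φ : (g : Gp.G) → Fib Y P (Gp.r g)}
    (hφ : CcPullbackSection P φ) :
    ∃ B : Gp.G → ℝ, Continuous B ∧ HasCompactSupport B ∧ (∀ g, 0 ≤ B g ∧ B g ≤ 1) ∧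
      ∀ δ : ℝ, 0 < δ → ∃ (n : ℕ) (h : Fin n → CcFun Y Gp) (p : Fin n → P),
        ∀ g, fibNormQ Y P (Gp.r g)
          (φ g - ∑ i, (h i).1 g • fibMk Y P (Gp.r g) (p i)) ≤ δ * B g := by
  obtain ⟨hc, K, hK, hK0⟩ := hφ
  obtain ⟨B, hB1, -, hBc, hB01⟩ := exists_continuous_one_zero_of_isCompact hK isClosed_empty
    (Set.disjoint_empty K)
  refine ⟨B, B.continuous, hBc, fun g => hB01 g, fun δ hδ => ?_⟩
  have hsmall : ∀ g ∉ K, fibNormQ Y P (Gp.r g) (φ g) ≤ δ := fun g hg => by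
    rw [hK0 g hg]
    exact (map_zero (fibSeminorm (Gp.r g))).le.trans hδ.le
  obtain ⟨n, f, p, hf, hfp⟩ := exists_partition_approx hc hK hδ hsmall
  refine ⟨n, fun i => ⟨fun g => (B g : ℂ) * (f i g : ℂ), by fun_prop,
    ((hf i).comp_left (g := fun x : ℝ => (x : ℂ)) Complex.ofReal_zero).mul_left⟩, p, fun g => ?_⟩
  have hBφ : φ g = (B g : ℂ) • φ g := by
    by_cases hg : g ∈ K
    · have : B g = 1 := hB1 hg
      simp [this]
    · rw [hK0 g hg, smul_zero]
  have heq : φ g - ∑ i, ((B g : ℂ) * (f i g : ℂ)) • fibMk Y P (Gp.r g) (p i) =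
      (B g : ℂ) • (φ g - ∑ i, (f i g : ℂ) • fibMk Y P (Gp.r g) (p i)) := by
    rw [smul_sub, ← hBφ, Finset.smul_sum]
    simp only [mul_smul]
  change fibSeminorm (Gp.r g) (φ g - ∑ i, ((B g : ℂ) * (f i g : ℂ)) • _) ≤ _
  rw [heq, map_smul_eq_mul, Complex.norm_real, Real.norm_of_nonneg (hB01 g).1, mul_comm]
  exact mul_le_mul_of_nonneg_right (hfp g) (hB01 g).1

/-- Pointwise domination by a bump function gives a bound on the `L²` norms. -/
lemma integral_sq_le (hs : HaarSystem Y Gp) {B : Gp.G → ℝ} (hB : Continuous B)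
    (hBc : HasCompactSupport B) (hB01 : ∀ g, 0 ≤ B g ∧ B g ≤ 1) {C : ℝ}
    (hC : ∀ y, ∫ g, B g ∂(hs.lam y) ≤ C) {u : Gp.G → ℝ} (hu : ∀ g, 0 ≤ u g) {c : ℝ}
    (huB : ∀ g, u g ≤ c * B g) (y : Y) : ∫ g, u g ^ 2 ∂(hs.lam y) ≤ c ^ 2 * C := by
  have h1 : ∀ g, u g ^ 2 ≤ c ^ 2 * B g := fun g => by
    have h2 : u g ^ 2 ≤ (c * B g) ^ 2 := pow_le_pow_left₀ (hu g) (huB g) 2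
    have h3 : B g ^ 2 ≤ B g := by nlinarith [(hB01 g).1, (hB01 g).2]
    rw [mul_pow] at h2
    exact h2.trans (mul_le_mul_of_nonneg_left h3 (sq_nonneg c))
  calc ∫ g, u g ^ 2 ∂(hs.lam y) ≤ ∫ g, c ^ 2 * B g ∂(hs.lam y) :=
        integral_mono_of_nonneg (ae_of_all _ fun g => sq_nonneg _)
          ((haar_integrable hs y hB hBc).const_mul _) (ae_of_all _ h1)
    _ = c ^ 2 * ∫ g, B g ∂(hs.lam y) := integral_const_mul _ _
    _ ≤ c ^ 2 * C := mul_le_mul_of_nonneg_left (hC y) (sq_nonneg c)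

/-- Every `φ ∈ C_c(G, r*E)` has an associated section `φ̂`: approximating sums of elementary
tensors form a Cauchy sequence in `P ⊗ P_G`, and `φ̂` is the section of its limit. -/
lemma exists_representsHat [CompleteSpace R] (td : TensorData Y P PG R) (d : PGData Gp hs PG)
    {φ : (g : Gp.G) → Fib Y P (Gp.r g)} (hφ : CcPullbackSection P φ) :
    ∃ Fs : (y : Y) → Fib Y R y, RepresentsHat hs P PG R td d φ Fs := by
  obtain ⟨B, hB, hBc, hB01, happ⟩ := exists_tensor_approx hφ
  obtain ⟨C, hC0, hC⟩ := haar_integral_bound hs hB hBc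
  let δ : ℕ → ℝ := fun k => 1 / ((k : ℝ) + 1)
  have hδ0 : ∀ k, 0 < δ k := fun k => Nat.one_div_pos_of_nat
  have hδlim : Tendsto δ atTop (𝓝 0) := tendsto_one_div_add_atTop_nhds_zero_nat
  choose n h p hp using fun k => happ (δ k) (hδ0 k)
  let x : ℕ → R := fun k => ∑ i, td.t (p k i) (d.emb (h k i))
  have hdist : ∀ k l, ‖x k - x l‖ ≤ (δ k + δ l) * √C := by
    intro k l
    have hc0 : 0 ≤ δ k + δ l := (add_pos (hδ0 k) (hδ0 l)).le
    refine norm_le_of_fibNormRep_le (Y := Y) (mul_nonneg hc0 (Real.sqrt_nonneg C)) fun y => ?_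
    refine le_of_abs_le (abs_le_of_sq_le_sq ?_ (mul_nonneg hc0 (Real.sqrt_nonneg C)))
    rw [fibNormRep_tensor_sub_sq, mul_pow, Real.sq_sqrt hC0]
    refine integral_sq_le hs hB hBc hB01 hC (fun g => fibNormRep_nonneg _ _) (fun g => ?_) y
    rw [← fibSeminorm_mk, fibMk_sub, fibMk_sum_smul, fibMk_sum_smul, add_mul]
    refine (map_sub_le_add (fibSeminorm (Gp.r g)) (φ g - _) (φ g - _)).trans' (le_of_eq ?_) |>.trans
      (add_le_add (hp l g) (hp k g)) |>.trans (le_of_eq (add_comm _ _))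
    rw [sub_sub_sub_cancel_left]
  have hcau : CauchySeq x := by
    refine cauchySeq_of_le_tendsto_0 (fun N => (δ N + δ N) * √C) (fun k l N hk hl => ?_) ?_
    · have hmono : ∀ k, N ≤ k → δ k ≤ δ N := fun k hk => Nat.one_div_le_one_div hk
      rw [dist_eq_norm]
      exact (hdist k l).trans (mul_le_mul_of_nonneg_right
        (add_le_add (hmono k hk) (hmono l hl)) (Real.sqrt_nonneg C))
    · simpa using (hδlim.add hδlim).mul_const (√C)
  obtain ⟨z, hz⟩ := cauchySeq_tendsto_of_complete hcau
  refine ⟨hatSec Y R z, hatSec_mem_C0SectionsP z, fun ε hε => ?_⟩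
  have hlim1 : Tendsto (fun k => δ k ^ 2 * C) atTop (𝓝 0) := by
    simpa using (hδlim.pow 2).mul_const C
  have hlim2 : Tendsto (fun k => ‖z - x k‖) atTop (𝓝 0) := by
    simpa using ((tendsto_const_nhds (x := z)).sub hz).norm
  obtain ⟨k, hk1, hk2⟩ := ((hlim1.eventually (ge_mem_nhds (pow_pos hε 2))).and
    (hlim2.eventually (ge_mem_nhds hε))).exists
  refine ⟨n k, h k, p k, fun y => ?_, fun y => ?_⟩
  · exact (integral_sq_le hs hB hBc hB01 hC
      (fun g => apply_nonneg (fibSeminorm (Gp.r g)) _) (hp k) y).trans hk1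
  · rw [hatSec, ← fibMk_sub, fibNormQ_mk]
    exact (fibNormRep_le_norm y _).trans hk2

/-- Finite sums of tensors `p ⊗ h` with `h ∈ C_c(G)` are dense in `P ⊗ P_G`. -/
lemma exists_tensor_emb_approx (td : TensorData Y P PG R) (d : PGData Gp hs PG) (x : R) {ε : ℝ}
    (hε : 0 < ε) : ∃ (n : ℕ) (h : Fin n → CcFun Y Gp) (p : Fin n → P),
      ‖x - ∑ i, td.t (p i) (d.emb (h i))‖ < ε := by
  obtain ⟨n, p, q, hpq⟩ := td.t_dense x (ε / 2) (half_pos hε)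
  have htle : ∀ (a : P) (b : PG), ‖td.t a b‖ ≤ ‖a‖ * ‖b‖ := fun a b => by
    refine norm_le_of_fibNormRep_le (Y := Y) (by positivity) fun y => ?_
    have him : (modIP Y a a y).im = 0 := HilbertCzeroModule.minner_self_im a y
    have hsq : fibNormRep Y R y (td.t a b) = fibNormRep Y P y a * fibNormRep Y PG y b := by
      rw [fibNormRep, td.t_inner, ZeroAtInftyContinuousMap.mul_apply, Complex.mul_re, him, zero_mul,
        sub_zero, ← fibNormRep_sq, Real.sqrt_mul (sq_nonneg _), Real.sqrt_sq (fibNormRep_nonneg _ _)]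
      rfl
    rw [hsq]
    exact mul_le_mul (fibNormRep_le_norm y a) (fibNormRep_le_norm y b) (fibNormRep_nonneg _ _)
      (norm_nonneg _)
  let η : ℝ := ε / 2 / (∑ i, ‖p i‖ + 1)
  have hS : 0 < ∑ i, ‖p i‖ + 1 := by positivity
  have hη : 0 < η := by positivity
  choose h hh using fun i => d.emb_dense (q i) η hη
  refine ⟨n, h, p, ?_⟩
  have hneg : ∀ (a : P) (b : PG), td.t a (-b) = -td.t a b := fun a b => by
    simpa using td.t_csmul_right (-1) a b
  have hdiff : ∑ i, td.t (p i) (q i) - ∑ i, td.t (p i) (d.emb (h i)) =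
      ∑ i, td.t (p i) (q i - d.emb (h i)) := by
    simp only [sub_eq_add_neg, td.t_add_right, hneg, Finset.sum_add_distrib, Finset.sum_neg_distrib]
  have h2 : ‖∑ i, td.t (p i) (q i) - ∑ i, td.t (p i) (d.emb (h i))‖ ≤ ε / 2 := by
    rw [hdiff]
    calc ‖∑ i, td.t (p i) (q i - d.emb (h i))‖ ≤ ∑ i, ‖p i‖ * η :=
          norm_sum_le_of_le _ fun i _ => (htle _ _).trans
            (mul_le_mul_of_nonneg_left (hh i).le (norm_nonneg _))
      _ = (∑ i, ‖p i‖) * η := (Finset.sum_mul _ _ _).symm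
      _ ≤ (∑ i, ‖p i‖ + 1) * η := mul_le_mul_of_nonneg_right (by linarith) hη.le
      _ = ε / 2 := mul_div_cancel₀ _ hS.ne'
  calc ‖x - ∑ i, td.t (p i) (d.emb (h i))‖
      ≤ ‖x - ∑ i, td.t (p i) (q i)‖ +
        ‖∑ i, td.t (p i) (q i) - ∑ i, td.t (p i) (d.emb (h i))‖ :=
        norm_sub_le_norm_sub_add_norm_sub _ _ _
    _ < ε := by linarith

end Tensors

end PullbackDensity

/-- **Proposition 2.8.**  Let `P` be a `G`-Hilbert module with bundle `E = E_P`.  The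
map `φ ↦ φ̂`, `φ̂(y) = φ|_{G^y} ∈ L²(G^y, E_y)`, sends `C_c(G, r*E)` into
`C₀(Y, L²(G) ⊗ E)` and its image is dense in the uniform norm; moreover the image
contains every section `ĥ ⊗ p̂ : y ↦ h|_{G^y} ⊗ p̂(y)` with `h ∈ C_c(G)`, `p ∈ P`. -/
theorem ccg_pullback_sections_dense
    (Y : Type) [TopologicalSpace Y] [T2Space Y] [LocallyCompactSpace Y]
    [SecondCountableTopology Y]
    (Gp : LCGroupoid Y) (hs : HaarSystem Y Gp)
    (P : Type) [NormedAddCommGroup P] [NormedSpace ℂ P] [CompleteSpace P]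
    [SecondCountableTopology P] [HilbertCzeroModule Y P] (AP : GAction Gp P)
    (PG : Type) [NormedAddCommGroup PG] [NormedSpace ℂ PG] [CompleteSpace PG]
    [SecondCountableTopology PG] [HilbertCzeroModule Y PG]
    (d : PGData Gp hs PG)
    -- R = P ⊗_{C₀(Y)} P_G, so that E_R = L²(G) ⊗ E
    (R : Type) [NormedAddCommGroup R] [NormedSpace ℂ R] [CompleteSpace R]
    [SecondCountableTopology R] [HilbertCzeroModule Y R]
    (td : TensorData Y P PG R) :
    -- each φ ∈ C_c(G, r*E) gives a section φ̂ ∈ C₀(Y, L²(G) ⊗ E)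
    (∀ φ : (g : Gp.G) → Fib Y P (Gp.r g), CcPullbackSection P φ →
      ∃ Fs : (y : Y) → Fib Y R y, RepresentsHat hs P PG R td d φ Fs) ∧
    -- the image of C_c(G, r*E) is uniformly dense in C₀(Y, L²(G) ⊗ E)
    (∀ Fs ∈ C0SectionsP Y R, ∀ ε : ℝ, 0 < ε →
      ∃ (φ : (g : Gp.G) → Fib Y P (Gp.r g)) (Fφ : (y : Y) → Fib Y R y),
        CcPullbackSection P φ ∧ RepresentsHat hs P PG R td d φ Fφ ∧
        ∀ y : Y, fibNormQ Y R y (Fs y - Fφ y) ≤ ε) ∧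
    -- the image contains all sections ĥ ⊗ p̂
    (∀ (h : CcFun Y Gp) (p : P),
      CcPullbackSection P (fun g => h.1 g • fibMk Y P (Gp.r g) p) ∧
      RepresentsHat hs P PG R td d (fun g => h.1 g • fibMk Y P (Gp.r g) p)
        (fun y => fibMk Y R y (td.t p (d.emb h)))) := by
  refine ⟨fun φ hφ => exists_representsHat td d hφ, fun Fs hFs ε hε => ?_, fun h p => ?_⟩
  · obtain ⟨x, hx⟩ := exists_hatSec_approx hFs (half_pos hε)
    obtain ⟨n, h, p, hhp⟩ := exists_tensor_emb_approx td d x (half_pos hε)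
    refine ⟨_, _, ccPullbackSection_sum h p, representsHat_sum td d h p, fun y => ?_⟩
    have h1 : fibSeminorm y (Fs y - fibMk Y R y x) ≤ ε / 2 := hx y
    have h2 : fibSeminorm y (fibMk Y R y x - fibMk Y R y (∑ i, td.t (p i) (d.emb (h i)))) ≤
        ε / 2 := by
      rw [← fibMk_sub, fibSeminorm_mk]
      exact (fibNormRep_le_norm y _).trans hhp.le
    have h3 := map_add_le_add (fibSeminorm y) (Fs y - fibMk Y R y x)
      (fibMk Y R y x - fibMk Y R y (∑ i, td.t (p i) (d.emb (h i))))
    rw [sub_add_sub_cancel] at h3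
    change fibSeminorm y _ ≤ ε
    linarith
  · have h1 := ccPullbackSection_sum (fun _ : Fin 1 => h) (fun _ => p)
    have h2 := representsHat_sum td d (fun _ : Fin 1 => h) (fun _ => p)
    simp only [Finset.univ_unique, Finset.sum_singleton] at h1 h2
    exact ⟨h1, h2⟩

end Stabilization
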